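/- Let ξ : ℕ → ℝ be a nonincreasing sequence of positive real numbers converging to 0 that satisfies the Δ₂-condition: there is a constant M > 0 with ξ(n) ≤ M · ξ(2n) for all n. Let T be the bounded diagonal operator on ℓ²(ℕ, ℂ) defined by T e_n = ξ(n) e_n for the standard orthonormal basis (e_n). Then the principal two-sided ideal (T) of B(ℓ²) generated by T is not soft-edged: (T) ≠ (T)·K(ℓ²). -/

import Mathlib

open Filter

/-- The Hilbert space `ℓ²(ℕ, ℂ)` of square-summable complex sequences. -/
noncomputable abbrev ellTwo : Type := lp (fun _ : ℕ => ℂ) 2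

/-- The standard orthonormal basis `(e_n)` of `ℓ²(ℕ, ℂ)`. -/
noncomputable def stdBasis (n : ℕ) : ellTwo := lp.single 2 n 1

/-- The two-sided ideal of compact operators on `ℓ²`. -/
noncomputable def compactIdeal : TwoSidedIdeal (ellTwo →L[ℂ] ellTwo) :=
  TwoSidedIdeal.mk' {T : ellTwo →L[ℂ] ellTwo | IsCompactOperator (T : ellTwo → ellTwo)}
    isCompactOperator_zero
    (fun hx hy => hx.add hy)
    (fun hx => hx.neg)
    (fun {x y} hy => by simpa [Function.comp] using hy.clm_comp x)
    (fun {x y} hx => by simpa [Function.comp] using hx.comp_clm y)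

/-- The product `I·J` of two two-sided ideals: the two-sided ideal whose elements are the
finite sums of products `XY` with `X ∈ I` and `Y ∈ J`. -/
noncomputable def idealMul {R : Type*} [Ring R] (I J : TwoSidedIdeal R) : TwoSidedIdeal R :=
  TwoSidedIdeal.span {x : R | ∃ a ∈ I, ∃ b ∈ J, x = a * b}

open Topology Asymptotics

/-!
Let `aₙ(A)` be the distance from `A` to the operators of rank at most `n`. Then
`aₘ₊ₙ(A + B) ≤ aₘ(A) + aₙ(B)` and `aₘ₊ₙ(AB) ≤ aₘ(A) aₙ(B)`. For a sequence `ξ` with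
`ξ(n/2) = O(ξ(n))`, which is what the `Δ₂`-condition provides, these inequalities show that
`aₙ(A) = O(ξ(n))` and `aₙ(A) = o(ξ(n))` both define two-sided ideals. With `ξ(n) = aₙ(T)`, the
principal ideal `(T)` lies in the first one. Compact operators on a Hilbert space satisfy
`aₙ(K) → 0`, so `(T)·K` lies in the second one. But `T` does not, since `aₙ(T) = o(aₙ(T))` is
impossible when all `aₙ(T)` are positive.
-/

/-- The `n`-th approximation number of `A`: its distance to the operators of rank at most `n`.
The indexing starts at `0`, so the sequence begins with `‖A‖` and a diagonal operator with
nonincreasing entries `ξ 0, ξ 1, …` has `ξ n` as its `n`-th approximation number. -/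
noncomputable def approxNumber {𝕜 E F : Type*} [NontriviallyNormedField 𝕜]
    [SeminormedAddCommGroup E] [NormedSpace 𝕜 E] [SeminormedAddCommGroup F] [NormedSpace 𝕜 F]
    (A : E →L[𝕜] F) (n : ℕ) : ℝ :=
  Metric.infDist A {B : E →L[𝕜] F | LinearMap.rank (B : E →ₗ[𝕜] F) ≤ n}

lemma exists_mem_ne_zero_map_eq_zero_of_rank_lt {𝕜 E F : Type*} [Field 𝕜] [AddCommGroup E]
    [Module 𝕜 E] [AddCommGroup F] [Module 𝕜 F] {B : E →ₗ[𝕜] F} {V : Submodule 𝕜 E} {n : ℕ}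
    (hB : LinearMap.rank B ≤ n) (hV : n < Module.rank 𝕜 V) : ∃ x ∈ V, x ≠ 0 ∧ B x = 0 := by
  by_contra! hker
  have hinj : Function.Injective (B.domRestrict V) :=
    (injective_iff_map_eq_zero _).2 fun v hv =>
      by_contra fun hv0 => hker v v.2 (Submodule.coe_eq_zero.not.2 hv0) hv
  have hrange : Module.rank 𝕜 (LinearMap.range (B.domRestrict V)) ≤ n :=
    (Submodule.rank_mono (LinearMap.range_comp_le_range _ _)).trans hB
  have hle := (LinearEquiv.ofInjective _ hinj).lift_rank_eq.trans_le
    (Cardinal.lift_le_nat_iff.2 hrange)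
  exact hV.not_ge (Cardinal.lift_le_nat_iff.1 hle)

section ApproxNumber

variable {𝕜 E F G : Type*} [NontriviallyNormedField 𝕜]
  [SeminormedAddCommGroup E] [NormedSpace 𝕜 E] [SeminormedAddCommGroup F] [NormedSpace 𝕜 F]
  [SeminormedAddCommGroup G] [NormedSpace 𝕜 G]

lemma nonempty_rank_le (n : ℕ) :
    {B : E →L[𝕜] F | LinearMap.rank (B : E →ₗ[𝕜] F) ≤ n}.Nonempty :=
  ⟨0, by simp⟩

lemma approxNumber_nonneg (A : E →L[𝕜] F) (n : ℕ) : 0 ≤ approxNumber A n :=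
  Metric.infDist_nonneg

lemma le_approxNumber_iff {A : E →L[𝕜] F} {n : ℕ} {c : ℝ} :
    c ≤ approxNumber A n ↔
      ∀ B : E →L[𝕜] F, LinearMap.rank (B : E →ₗ[𝕜] F) ≤ n → c ≤ ‖A - B‖ := by
  simp only [approxNumber, Metric.le_infDist (nonempty_rank_le n), Set.mem_ofPred_eq,
    dist_eq_norm]

lemma approxNumber_le_norm_sub (A : E →L[𝕜] F) {B : E →L[𝕜] F} {n : ℕ}
    (hB : LinearMap.rank (B : E →ₗ[𝕜] F) ≤ n) : approxNumber A n ≤ ‖A - B‖ :=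
  le_approxNumber_iff.1 le_rfl B hB

lemma approxNumber_lt_iff {A : E →L[𝕜] F} {n : ℕ} {c : ℝ} :
    approxNumber A n < c ↔
      ∃ B : E →L[𝕜] F, LinearMap.rank (B : E →ₗ[𝕜] F) ≤ n ∧ ‖A - B‖ < c := by
  simp only [approxNumber, Metric.infDist_lt_iff (nonempty_rank_le n), Set.mem_ofPred_eq,
    dist_eq_norm]

lemma approxNumber_antitone (A : E →L[𝕜] F) : Antitone (approxNumber A) := fun _ _ hmn =>
  Metric.infDist_le_infDist_of_subset
    (Set.ofPred_subset_ofPred.2 fun _ hB => hB.trans (Nat.cast_le.2 hmn)) (nonempty_rank_le _)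

lemma approxNumber_zero (n : ℕ) : approxNumber (0 : E →L[𝕜] F) n = 0 :=
  Metric.infDist_zero_of_mem (by simp)

lemma approxNumber_neg (A : E →L[𝕜] F) (n : ℕ) : approxNumber (-A) n = approxNumber A n := by
  suffices h : ∀ B : E →L[𝕜] F, approxNumber (-B) n ≤ approxNumber B n from
    (h A).antisymm (by simpa using h (-A))
  refine fun B => le_approxNumber_iff.2 fun C hC => ?_
  have hrank : LinearMap.rank ((-C : E →L[𝕜] F) : E →ₗ[𝕜] F) ≤ n := by
    rwa [ContinuousLinearMap.toLinearMap_neg, LinearMap.rank, LinearMap.range_neg]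
  calc approxNumber (-B) n ≤ ‖-B - -C‖ := approxNumber_le_norm_sub _ hrank
    _ = ‖B - C‖ := by rw [← neg_sub', norm_neg]

lemma approxNumber_add_le (A B : E →L[𝕜] F) (m n : ℕ) :
    approxNumber (A + B) (m + n) ≤ approxNumber A m + approxNumber B n := by
  refine le_add_of_forall_lt fun c hc d hd => ?_
  obtain ⟨A', hA', hAc⟩ := approxNumber_lt_iff.1 hc
  obtain ⟨B', hB', hBd⟩ := approxNumber_lt_iff.1 hd
  have hrank : LinearMap.rank ((A' + B' : E →L[𝕜] F) : E →ₗ[𝕜] F) ≤ (m + n : ℕ) := by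
    push_cast
    exact (LinearMap.rank_add_le _ _).trans (add_le_add hA' hB')
  calc approxNumber (A + B) (m + n) ≤ ‖A + B - (A' + B')‖ := approxNumber_le_norm_sub _ hrank
    _ = ‖(A - A') + (B - B')‖ := by rw [add_sub_add_comm]
    _ ≤ c + d := (norm_add_le _ _).trans (add_le_add hAc.le hBd.le)

lemma rank_comp_le_of_rank_right_le {A : F →L[𝕜] G} {B : E →L[𝕜] F} {n : ℕ}
    (hB : LinearMap.rank (B : E →ₗ[𝕜] F) ≤ n) :
    LinearMap.rank ((A.comp B : E →L[𝕜] G) : E →ₗ[𝕜] G) ≤ n := by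
  have h := LinearMap.lift_rank_comp_le_right (B : E →ₗ[𝕜] F) (A : F →ₗ[𝕜] G)
  exact Cardinal.lift_le_nat_iff.1 (h.trans (Cardinal.lift_le_nat_iff.2 hB))

lemma approxNumber_comp_le (A : F →L[𝕜] G) (B : E →L[𝕜] F) (m n : ℕ) :
    approxNumber (A.comp B) (m + n) ≤ approxNumber A m * approxNumber B n := by
  refine le_mul_of_forall_lt₀ fun c hc d hd => ?_
  obtain ⟨A', hA', hAc⟩ := approxNumber_lt_iff.1 hc
  obtain ⟨B', hB', hBd⟩ := approxNumber_lt_iff.1 hd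
  have hrank : LinearMap.rank
      ((A'.comp B + (A - A').comp B' : E →L[𝕜] G) : E →ₗ[𝕜] G) ≤ (m + n : ℕ) := by
    rw [ContinuousLinearMap.toLinearMap_add, Nat.cast_add]
    exact (LinearMap.rank_add_le _ _).trans (add_le_add
      ((LinearMap.rank_comp_le_left _ _).trans hA') (rank_comp_le_of_rank_right_le hB'))
  calc approxNumber (A.comp B) (m + n)
      ≤ ‖A.comp B - (A'.comp B + (A - A').comp B')‖ := approxNumber_le_norm_sub _ hrank
    _ = ‖(A - A').comp (B - B')‖ := by
        simp only [ContinuousLinearMap.comp_sub, ContinuousLinearMap.sub_comp]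
        abel_nf
    _ ≤ ‖A - A'‖ * ‖B - B'‖ := ContinuousLinearMap.opNorm_comp_le _ _
    _ ≤ c * d := mul_le_mul hAc.le hBd.le (norm_nonneg _) ((approxNumber_nonneg A m).trans hc.le)

lemma norm_approxNumber (A : E →L[𝕜] F) (n : ℕ) : ‖approxNumber A n‖ = approxNumber A n :=
  Real.norm_of_nonneg (approxNumber_nonneg A n)

lemma approxNumber_comp_isBigO_right (A : F →L[𝕜] G) (B : E →L[𝕜] F) :
    approxNumber (A.comp B) =O[atTop] approxNumber B :=
  .of_bound (approxNumber A 0) <| .of_forall fun n => by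
    simpa only [norm_approxNumber, zero_add] using approxNumber_comp_le A B 0 n

lemma approxNumber_comp_isBigO_left (A : F →L[𝕜] G) (B : E →L[𝕜] F) :
    approxNumber (A.comp B) =O[atTop] approxNumber A :=
  .of_bound (approxNumber B 0) <| .of_forall fun n => by
    simpa only [norm_approxNumber, add_zero, mul_comm] using approxNumber_comp_le A B n 0

lemma approxNumber_add_isBigO (A B : E →L[𝕜] F) :
    approxNumber (A + B) =O[atTop] fun n => approxNumber A (n / 2) + approxNumber B (n / 2) :=
  .of_norm_le fun n => by
    simpa only [norm_approxNumber] using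
      (approxNumber_antitone _ (by omega)).trans (approxNumber_add_le A B (n / 2) (n / 2))

lemma approxNumber_comp_isBigO (A : F →L[𝕜] G) (B : E →L[𝕜] F) :
    approxNumber (A.comp B) =O[atTop] fun n => approxNumber A (n / 2) * approxNumber B (n / 2) :=
  .of_norm_le fun n => by
    simpa only [norm_approxNumber] using
      (approxNumber_antitone _ (by omega)).trans (approxNumber_comp_le A B (n / 2) (n / 2))

lemma le_approxNumber_of_lt_rank {E : Type*} [NormedAddCommGroup E] [NormedSpace 𝕜 E]
    {A : E →L[𝕜] F} {n : ℕ} {c : ℝ} {V : Submodule 𝕜 E} (hV : n < Module.rank 𝕜 V)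
    (hc : ∀ x ∈ V, c * ‖x‖ ≤ ‖A x‖) : c ≤ approxNumber A n := by
  refine le_approxNumber_iff.2 fun B hB => ?_
  obtain ⟨x, hxV, hx0, hBx⟩ := exists_mem_ne_zero_map_eq_zero_of_rank_lt hB hV
  have hAx : c * ‖x‖ ≤ ‖A - B‖ * ‖x‖ :=
    calc c * ‖x‖ ≤ ‖A x‖ := hc x hxV
      _ = ‖(A - B) x‖ := by rw [sub_apply, show B x = 0 from hBx, sub_zero]
      _ ≤ ‖A - B‖ * ‖x‖ := (A - B).le_opNorm x
  exact le_of_mul_le_mul_right hAx (norm_pos_iff.2 hx0)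

end ApproxNumber

section Compact

variable {𝕜 E H : Type*} [RCLike 𝕜] [SeminormedAddCommGroup E] [NormedSpace 𝕜 E]
  [NormedAddCommGroup H] [InnerProductSpace 𝕜 H]

lemma norm_sub_starProjection_le (V : Submodule 𝕜 H) [V.HasOrthogonalProjection] (x : H) {y : H}
    (hy : y ∈ V) : ‖x - V.starProjection x‖ ≤ ‖x - y‖ := by
  rw [Submodule.starProjection_minimal]
  exact ciInf_le (f := fun w : V => ‖x - w‖) ⟨0, Set.forall_mem_range.2 fun _ => norm_nonneg _⟩
    ⟨y, hy⟩

lemma exists_finiteDimensional_norm_sub_starProjection_comp_le {K : E →L[𝕜] H}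
    (hK : IsCompactOperator K) {ε : ℝ} (hε : 0 < ε) :
    ∃ (V : Submodule 𝕜 H) (_ : FiniteDimensional 𝕜 V), ‖K - V.starProjection.comp K‖ ≤ ε := by
  have hbdd : TotallyBounded (K '' Metric.closedBall 0 1) :=
    (IsCompactOperator.isCompact_closure_image_closedBall (f := (K : E →ₗ[𝕜] H)) hK
      1).totallyBounded.subset subset_closure
  obtain ⟨t, htfin, ht⟩ := Metric.totallyBounded_iff.1 hbdd ε hε
  have := FiniteDimensional.span_of_finite 𝕜 htfin
  refine ⟨Submodule.span 𝕜 t, this, ?_⟩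
  refine ContinuousLinearMap.opNorm_le_of_unit_norm (𝕜 := 𝕜) hε.le fun x hx => ?_
  have hKx : K x ∈ K '' Metric.closedBall 0 1 := Set.mem_image_of_mem K (by simp [hx])
  obtain ⟨y, hyt, hxy⟩ := Set.mem_iUnion₂.1 (ht hKx)
  calc ‖K x - (Submodule.span 𝕜 t).starProjection (K x)‖ ≤ ‖K x - y‖ :=
        norm_sub_starProjection_le _ _ (Submodule.subset_span hyt)
    _ ≤ ε := (mem_ball_iff_norm.1 hxy).le

lemma rank_starProjection_comp_le (V : Submodule 𝕜 H) [FiniteDimensional 𝕜 V] (K : E →L[𝕜] H) :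
    LinearMap.rank ((V.starProjection.comp K : E →L[𝕜] H) : E →ₗ[𝕜] H) ≤
      (Module.finrank 𝕜 V : ℕ) := by
  rw [LinearMap.rank, Module.finrank_eq_rank]
  refine Submodule.rank_mono ?_
  rintro _ ⟨x, rfl⟩
  exact V.starProjection_apply_mem (K x)

lemma tendsto_approxNumber_of_isCompactOperator {K : E →L[𝕜] H} (hK : IsCompactOperator K) :
    Tendsto (approxNumber K) atTop (𝓝 0) := by
  refine tendsto_order.2 ⟨fun c hc => .of_forall fun n => hc.trans_le (approxNumber_nonneg K n),
    fun ε hε => ?_⟩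
  obtain ⟨V, _, hV⟩ := exists_finiteDimensional_norm_sub_starProjection_comp_le hK (half_pos hε)
  filter_upwards [eventually_ge_atTop (Module.finrank 𝕜 V)] with n hn
  calc approxNumber K n ≤ approxNumber K (Module.finrank 𝕜 V) := approxNumber_antitone K hn
    _ ≤ ‖K - V.starProjection.comp K‖ :=
        approxNumber_le_norm_sub K (rank_starProjection_comp_le V K)
    _ ≤ ε / 2 := hV
    _ < ε := half_lt_self hε

end Compact

section Diagonal

open scoped ENNReal

variable {𝕜 : Type*} [NontriviallyNormedField 𝕜] {p : ℝ≥0∞}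

lemma lp_single_eq_smul (i : ℕ) (a : 𝕜) :
    lp.single (E := fun _ : ℕ => 𝕜) p i a = a • lp.single p i 1 := by
  rw [← lp.single_smul, smul_eq_mul, mul_one]

lemma linearIndependent_lp_single :
    LinearIndependent 𝕜 fun i : ℕ => lp.single (E := fun _ : ℕ => 𝕜) p i 1 :=
  .of_comp (LinearMap.pi fun i => lp.evalₗ (fun _ : ℕ => 𝕜) p i)
    (Pi.linearIndependent_single_one ℕ 𝕜)

variable [Fact (1 ≤ p)]

lemma apply_eq_mul_of_map_single (hp : p ≠ ∞) {ξ : ℕ → 𝕜}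
    {T : lp (fun _ : ℕ => 𝕜) p →L[𝕜] lp (fun _ : ℕ => 𝕜) p}
    (hT : ∀ n, T (lp.single p n 1) = ξ n • lp.single p n 1) (x : lp (fun _ : ℕ => 𝕜) p) (k : ℕ) :
    T x k = ξ k * x k := by
  have hcoord (i : ℕ) : T (lp.single p i (x i)) k = if i = k then ξ k * x k else 0 := by
    rw [lp_single_eq_smul, map_smul, hT, smul_smul, lp.coeFn_smul, Pi.smul_apply,
      lp.single_apply]
    split_ifs with hik
    · subst hik; simp [mul_comm]
    · simp [Ne.symm hik]
  have hsum : HasSum (fun i => T (lp.single p i (x i)) k) (T x k) :=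
    ((lp.hasSum_single hp x).mapL T).mapL (lp.evalCLM 𝕜 (fun _ : ℕ => 𝕜) p k)
  simp only [hcoord] at hsum
  exact hsum.unique (hasSum_ite_eq k _)

/-- The projection of `ℓᵖ(ℕ)` onto its first `n` coordinates. Composed with a diagonal operator
with nonincreasing entries, it is a best approximation of rank at most `n`. -/
noncomputable def lpTruncation (𝕜 : Type*) [NontriviallyNormedField 𝕜] (p : ℝ≥0∞) [Fact (1 ≤ p)]
    (n : ℕ) : lp (fun _ : ℕ => 𝕜) p →L[𝕜] lp (fun _ : ℕ => 𝕜) p :=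
  ∑ i ∈ Finset.range n, (lp.singleContinuousLinearMap 𝕜 (fun _ : ℕ => 𝕜) p i).comp
    (lp.evalCLM 𝕜 (fun _ : ℕ => 𝕜) p i)

lemma lpTruncation_eq_sum (n : ℕ) (x : lp (fun _ : ℕ => 𝕜) p) :
    lpTruncation 𝕜 p n x = ∑ i ∈ Finset.range n, lp.single p i (x i) := by
  rw [lpTruncation, sum_apply]
  rfl

lemma lpTruncation_apply (n : ℕ) (x : lp (fun _ : ℕ => 𝕜) p) (k : ℕ) :
    lpTruncation 𝕜 p n x k = if k < n then x k else 0 := by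
  rw [lpTruncation_eq_sum, lp.coeFn_sum, Finset.sum_apply]
  simp only [lp.single_apply, Pi.single_apply]
  simp

lemma lpTruncation_single {i n : ℕ} (hin : i < n) (a : 𝕜) :
    lpTruncation 𝕜 p n (lp.single p i a) = lp.single p i a := by
  ext k
  rw [lpTruncation_apply]
  split_ifs with hk
  · rfl
  · exact (lp.single_apply_ne (E := fun _ : ℕ => 𝕜) p i a (by omega)).symm

lemma range_lpTruncation (n : ℕ) :
    LinearMap.range
        (lpTruncation 𝕜 p n : lp (fun _ : ℕ => 𝕜) p →ₗ[𝕜] lp (fun _ : ℕ => 𝕜) p) =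
      Submodule.span 𝕜 (Set.range fun i : Fin n => lp.single p (i : ℕ) 1) := by
  refine le_antisymm ?_ (Submodule.span_le.2 ?_)
  · rintro _ ⟨x, rfl⟩
    rw [ContinuousLinearMap.coe_coe, lpTruncation_eq_sum]
    refine Submodule.sum_mem _ fun i hi => ?_
    rw [lp_single_eq_smul]
    exact Submodule.smul_mem _ _ (Submodule.subset_span ⟨⟨i, Finset.mem_range.1 hi⟩, rfl⟩)
  · rintro _ ⟨i, rfl⟩
    exact ⟨lp.single p (i : ℕ) 1, lpTruncation_single i.2 1⟩

lemma rank_lpTruncation (n : ℕ) :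
    LinearMap.rank
      (lpTruncation 𝕜 p n : lp (fun _ : ℕ => 𝕜) p →ₗ[𝕜] lp (fun _ : ℕ => 𝕜) p) = n := by
  have hli : LinearIndependent 𝕜
      fun i : Fin n => lp.single (E := fun _ : ℕ => 𝕜) p (i : ℕ) 1 :=
    linearIndependent_lp_single.comp _ Fin.val_injective
  have := FiniteDimensional.span_of_finite 𝕜
    (Set.finite_range fun i : Fin n => lp.single (E := fun _ : ℕ => 𝕜) p (i : ℕ) 1)
  rw [LinearMap.rank, range_lpTruncation, ← Module.finrank_eq_rank, finrank_span_eq_card hli,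
    Fintype.card_fin]

lemma approxNumber_le_of_diagonal {ξ : ℕ → 𝕜} (hξ : Antitone fun n => ‖ξ n‖)
    {T : lp (fun _ : ℕ => 𝕜) p →L[𝕜] lp (fun _ : ℕ => 𝕜) p} (hT : ∀ x k, T x k = ξ k * x k)
    (n : ℕ) : approxNumber T n ≤ ‖ξ n‖ := by
  have hrank := (LinearMap.rank_comp_le_left
    (T : lp (fun _ : ℕ => 𝕜) p →ₗ[𝕜] lp (fun _ : ℕ => 𝕜) p)
    (lpTruncation 𝕜 p n : lp (fun _ : ℕ => 𝕜) p →ₗ[𝕜] lp (fun _ : ℕ => 𝕜) p)).trans_eq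
    (rank_lpTruncation n)
  refine (approxNumber_le_norm_sub T (B := (lpTruncation 𝕜 p n).comp T) hrank).trans ?_
  refine ContinuousLinearMap.opNorm_le_bound _ (norm_nonneg _) fun x => ?_
  have hcoord (k : ℕ) :
      (T - (lpTruncation 𝕜 p n).comp T) x k = if k < n then 0 else ξ k * x k := by
    change T x k - lpTruncation 𝕜 p n (T x) k = _
    rw [lpTruncation_apply, hT]
    split_ifs <;> simp
  rw [← norm_smul]
  refine lp.norm_mono (zero_lt_one.trans_le Fact.out).ne' fun k => ?_
  rw [hcoord, lp.coeFn_smul, Pi.smul_apply, smul_eq_mul]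
  split_ifs with hk
  · simpa only [norm_zero] using norm_nonneg _
  · rw [norm_mul, norm_mul]
    exact mul_le_mul_of_nonneg_right (hξ (not_lt.1 hk)) (norm_nonneg _)

lemma le_approxNumber_of_diagonal {ξ : ℕ → 𝕜} (hξ : Antitone fun n => ‖ξ n‖)
    {T : lp (fun _ : ℕ => 𝕜) p →L[𝕜] lp (fun _ : ℕ => 𝕜) p} (hT : ∀ x k, T x k = ξ k * x k)
    (n : ℕ) : ‖ξ n‖ ≤ approxNumber T n := by
  have hrank := (Nat.cast_lt.2 n.lt_succ_self).trans_eq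
    (rank_lpTruncation (𝕜 := 𝕜) (p := p) (n + 1)).symm
  refine le_approxNumber_of_lt_rank hrank ?_
  rintro _ ⟨x, rfl⟩
  rw [← norm_smul]
  refine lp.norm_mono (zero_lt_one.trans_le Fact.out).ne' fun k => ?_
  rw [ContinuousLinearMap.coe_coe, hT, lp.coeFn_smul, Pi.smul_apply, lpTruncation_apply,
    smul_eq_mul, norm_mul, norm_mul]
  split_ifs with hk
  · exact mul_le_mul_of_nonneg_right (hξ (Nat.le_of_lt_succ hk)) (norm_nonneg _)
  · simp only [norm_zero, mul_zero, le_refl]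

lemma approxNumber_of_map_single (hp : p ≠ ∞) {ξ : ℕ → 𝕜} (hξ : Antitone fun n => ‖ξ n‖)
    {T : lp (fun _ : ℕ => 𝕜) p →L[𝕜] lp (fun _ : ℕ => 𝕜) p}
    (hT : ∀ n, T (lp.single p n 1) = ξ n • lp.single p n 1) (n : ℕ) :
    approxNumber T n = ‖ξ n‖ :=
  (approxNumber_le_of_diagonal hξ (apply_eq_mul_of_map_single hp hT) n).antisymm
    (le_approxNumber_of_diagonal hξ (apply_eq_mul_of_map_single hp hT) n)

end Diagonal

section Ideals

variable {𝕜 E : Type*} [NontriviallyNormedField 𝕜] [SeminormedAddCommGroup E] [NormedSpace 𝕜 E]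

lemma tendsto_div_two_atTop : Tendsto (fun n : ℕ => n / 2) atTop atTop :=
  Nat.tendsto_div_const_atTop two_ne_zero

/-- The ideal of operators whose approximation numbers are `O(ξ)`. The condition `hξ` makes it
closed under addition, since `a (A + B) n ≤ a A (n / 2) + a B (n / 2)` for the approximation
numbers `a`. -/
def bigOIdeal (𝕜 E : Type*) [NontriviallyNormedField 𝕜] [SeminormedAddCommGroup E]
    [NormedSpace 𝕜 E] (ξ : ℕ → ℝ) (hξ : (fun n => ξ (n / 2)) =O[atTop] ξ) :
    TwoSidedIdeal (E →L[𝕜] E) :=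
  .mk' {A | approxNumber A =O[atTop] ξ}
    (by simpa only [Set.mem_ofPred_eq, funext (approxNumber_zero (𝕜 := 𝕜) (E := E) (F := E))]
      using isBigO_zero ξ atTop)
    (fun {A B} hA hB => (approxNumber_add_isBigO A B).trans
      (((hA.comp_tendsto tendsto_div_two_atTop).add
        (hB.comp_tendsto tendsto_div_two_atTop)).trans hξ))
    (fun {A} hA => by simpa only [Set.mem_ofPred_eq, funext (approxNumber_neg A)] using hA)
    (fun {A B} hB => (approxNumber_comp_isBigO_right A B).trans hB)
    (fun {A B} hA => (approxNumber_comp_isBigO_left A B).trans hA)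

/-- The ideal of operators whose approximation numbers are `o(ξ)`. As for `bigOIdeal`, the condition
`hξ` makes it closed under addition. -/
def littleOIdeal (𝕜 E : Type*) [NontriviallyNormedField 𝕜] [SeminormedAddCommGroup E]
    [NormedSpace 𝕜 E] (ξ : ℕ → ℝ) (hξ : (fun n => ξ (n / 2)) =O[atTop] ξ) :
    TwoSidedIdeal (E →L[𝕜] E) :=
  .mk' {A | approxNumber A =o[atTop] ξ}
    (by simpa only [Set.mem_ofPred_eq, funext (approxNumber_zero (𝕜 := 𝕜) (E := E) (F := E))]
      using isLittleO_zero ξ atTop)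
    (fun {A B} hA hB => (approxNumber_add_isBigO A B).trans_isLittleO
      (((hA.comp_tendsto tendsto_div_two_atTop).add
        (hB.comp_tendsto tendsto_div_two_atTop)).trans_isBigO hξ))
    (fun {A} hA => by simpa only [Set.mem_ofPred_eq, funext (approxNumber_neg A)] using hA)
    (fun {A B} hB => (approxNumber_comp_isBigO_right A B).trans_isLittleO hB)
    (fun {A B} hA => (approxNumber_comp_isBigO_left A B).trans_isLittleO hA)

lemma mem_bigOIdeal {ξ : ℕ → ℝ} {hξ : (fun n => ξ (n / 2)) =O[atTop] ξ} {A : E →L[𝕜] E} :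
    A ∈ bigOIdeal 𝕜 E ξ hξ ↔ approxNumber A =O[atTop] ξ :=
  TwoSidedIdeal.mem_mk' ..

lemma mem_littleOIdeal {ξ : ℕ → ℝ} {hξ : (fun n => ξ (n / 2)) =O[atTop] ξ} {A : E →L[𝕜] E} :
    A ∈ littleOIdeal 𝕜 E ξ hξ ↔ approxNumber A =o[atTop] ξ :=
  TwoSidedIdeal.mem_mk' ..

lemma idealMul_le {R : Type*} [Ring R] {I J L : TwoSidedIdeal R} :
    idealMul I J ≤ L ↔ ∀ a ∈ I, ∀ b ∈ J, a * b ∈ L := by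
  rw [idealMul, TwoSidedIdeal.span_le]
  exact ⟨fun h a ha b hb => h ⟨a, ha, b, hb, rfl⟩,
    fun h _ ⟨a, ha, b, hb, hab⟩ => hab ▸ h a ha b hb⟩

lemma idealMul_le_littleOIdeal {ξ : ℕ → ℝ} {hξ : (fun n => ξ (n / 2)) =O[atTop] ξ}
    {I J : TwoSidedIdeal (E →L[𝕜] E)} (hI : I ≤ bigOIdeal 𝕜 E ξ hξ)
    (hJ : ∀ K ∈ J, Tendsto (approxNumber K) atTop (𝓝 0)) :
    idealMul I J ≤ littleOIdeal 𝕜 E ξ hξ := by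
  refine idealMul_le.2 fun A hA K hK => mem_littleOIdeal.2 ?_
  have hA' : (fun n => approxNumber A (n / 2)) =O[atTop] ξ :=
    ((mem_bigOIdeal.1 (hI hA)).comp_tendsto tendsto_div_two_atTop).trans hξ
  have hK' : (fun n => approxNumber K (n / 2)) =o[atTop] fun _ => (1 : ℝ) :=
    (isLittleO_one_iff ℝ).2 ((hJ K hK).comp tendsto_div_two_atTop)
  exact (approxNumber_comp_isBigO A K).trans_isLittleO
    (by simpa only [mul_one] using hA'.mul_isLittleO hK')

lemma isBigO_comp_div_two {ξ : ℕ → ℝ} (hξ : Antitone ξ) (hnonneg : ∀ n, 0 ≤ ξ n)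
    (hΔ₂ : ξ =O[atTop] fun n => ξ (2 * n)) : (fun n => ξ (n / 2)) =O[atTop] ξ := by
  have hdouble : Tendsto (fun n : ℕ => 2 * (n / 2)) atTop atTop :=
    tendsto_div_two_atTop.const_mul_atTop' two_pos
  have hquad : (fun n => ξ (2 * (2 * (n / 2)))) =O[atTop] ξ := by
    refine .of_bound 1 ?_
    filter_upwards [eventually_ge_atTop 2] with n hn
    rw [one_mul, Real.norm_of_nonneg (hnonneg _), Real.norm_of_nonneg (hnonneg _)]
    exact hξ (by omega)
  exact ((hΔ₂.comp_tendsto tendsto_div_two_atTop).trans (hΔ₂.comp_tendsto hdouble)).trans hquad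

theorem stmt6_general (T : E →L[𝕜] E) (hpos : ∀ n, 0 < approxNumber T n)
    (hΔ₂ : ∃ M : ℝ, ∀ n, approxNumber T n ≤ M * approxNumber T (2 * n))
    (J : TwoSidedIdeal (E →L[𝕜] E)) (hJ : ∀ K ∈ J, Tendsto (approxNumber K) atTop (𝓝 0)) :
    TwoSidedIdeal.span {T} ≠ idealMul (TwoSidedIdeal.span {T}) J := by
  obtain ⟨M, hM⟩ := hΔ₂
  have hdouble : approxNumber T =O[atTop] fun n => approxNumber T (2 * n) :=
    .of_bound M <| .of_forall fun n => by simpa only [norm_approxNumber] using hM n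
  have hhalf := isBigO_comp_div_two (approxNumber_antitone T) (approxNumber_nonneg T) hdouble
  have hspan : TwoSidedIdeal.span {T} ≤ bigOIdeal 𝕜 E (approxNumber T) hhalf :=
    TwoSidedIdeal.span_le.2 (Set.singleton_subset_iff.2 (mem_bigOIdeal.2 (isBigO_refl _ _)))
  intro hsoft
  have hT : T ∈ littleOIdeal 𝕜 E (approxNumber T) hhalf :=
    idealMul_le_littleOIdeal hspan hJ
      (hsoft ▸ TwoSidedIdeal.subset_span (Set.mem_singleton T))
  exact isLittleO_irrefl (.of_forall fun n => (hpos n).ne') (mem_littleOIdeal.1 hT)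

end Ideals

section EllTwo

lemma approxNumber_eq_of_map_stdBasis {ξ : ℕ → ℝ} (hnonneg : ∀ n, 0 ≤ ξ n) (hanti : Antitone ξ)
    {T : ellTwo →L[ℂ] ellTwo} (hT : ∀ n, T (stdBasis n) = (ξ n : ℂ) • stdBasis n) :
    approxNumber T = ξ := by
  have hnorm (n : ℕ) : ‖(ξ n : ℂ)‖ = ξ n := Complex.norm_of_nonneg (hnonneg n)
  ext n
  rw [approxNumber_of_map_single ENNReal.ofNat_ne_top (by simpa only [hnorm] using hanti) hT,
    hnorm]

lemma mem_compactIdeal {K : ellTwo →L[ℂ] ellTwo} :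
    K ∈ compactIdeal ↔ IsCompactOperator (K : ellTwo → ellTwo) :=
  TwoSidedIdeal.mem_mk' _ _ _ _ _ _ K

end EllTwo

/-- Let `ξ : ℕ → ℝ` be a nonincreasing sequence of positive reals tending to `0`
satisfying the `Δ₂`-condition (`ξ n ≤ M · ξ (2n)` for some `M > 0`).  Then the principal
two-sided ideal generated by the diagonal operator `T e_n = ξ n • e_n` on `ℓ²(ℕ, ℂ)` is
not soft-edged: `(T) ≠ (T)·K(ℓ²)`. -/
theorem stmt6 (ξ : ℕ → ℝ) (hpos : ∀ n, 0 < ξ n) (hanti : Antitone ξ)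
    (hlim : Tendsto ξ atTop (nhds 0))
    (hΔ₂ : ∃ M : ℝ, 0 < M ∧ ∀ n, ξ n ≤ M * ξ (2 * n))
    (T : ellTwo →L[ℂ] ellTwo)
    (hT : ∀ n : ℕ, T (stdBasis n) = (ξ n : ℂ) • stdBasis n) :
    TwoSidedIdeal.span {T} ≠ idealMul (TwoSidedIdeal.span {T}) compactIdeal := by
  have ha : approxNumber T = ξ := approxNumber_eq_of_map_stdBasis (fun n => (hpos n).le) hanti hT
  exact stmt6_general T (ha ▸ hpos) (ha ▸ hΔ₂.imp fun _ hM => hM.2) compactIdeal fun K hK =>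
    tendsto_approxNumber_of_isCompactOperator (mem_compactIdeal.1 hK)
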